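/- arXiv:1309.0942 — 6 statements merged into one kernel-verified Lean document; each statement's English description precedes it below -/
import Mathlib

section
/- Let d ≥ 1, let ν be a measure on ℝ^d with ∫_{ℝ^d} (1 ∧ |z|²) ν(dz) < ∞, let σ be an invertible d×d real matrix, and let b : ℝ^d → ℝ^d. Let Φ ∈ C([0,∞)) ∩ C²((0,∞)). Let f : ℝ^d → (0,∞) be a C² function which is constant outside a compact set. Then for every x ∈ ℝ^d all the integrals below converge absolutely, and ℒ(Φ∘f)(x) − Φ'(f(x)) · ℒf(x) = ∫_{ℝ^d} Ψ_Φ(f(x + σz), f(x)) ν(dz). -/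
open MeasureTheory

/-!
By the chain rule `∇(Φ ∘ f)(x) = Φ'(f x) ∇f(x)`, so in the compensated increment of `Φ ∘ f` minus
`Φ'(f x)` times that of `f` the compensators cancel, leaving `Ψ_Φ(f(x + σz), f(x))` pointwise in
`z`; the drift terms cancel for the same reason. The identity follows by integrating, since a
compensated increment of a bounded function which is `C²` at `x` is `O(1 ∧ |z|²)`.
-/

section CompensatedIncrement

open Asymptotics Bornology Filter Set Topology

theorem isCompact_range_of_eqOn_compl_const {X Y : Type*} [TopologicalSpace X]
    [TopologicalSpace Y] {f : X → Y} {K : Set X} {c : Y} (hf : ContinuousOn f K) (hK : IsCompact K)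
    (hc : ∀ x ∉ K, f x = c) : IsCompact (range f) := by
  rw [← image_univ, ← union_compl_self K, image_union]
  exact (hK.image_of_continuousOn hf).union
    ((finite_singleton c).subset (image_subset_iff.2 hc)).isCompact

theorem integrable_of_isBigO_norm_sq_of_isBounded_range {F G : Type*}
    [NormedAddCommGroup F] [MeasurableSpace F] [NormedAddCommGroup G] {ν : Measure F}
    (hν : Integrable (fun z => min 1 (‖z‖ ^ 2)) ν) {u : F → G}
    (hu : AEStronglyMeasurable u ν) (hu₀ : u =O[𝓝 0] fun z => ‖z‖ ^ 2)
    (hub : IsBounded (range u)) : Integrable u ν := by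
  obtain ⟨C, hC⟩ := hu₀.bound
  obtain ⟨δ, hδ, hball⟩ := Metric.eventually_nhds_iff_ball.1 hC
  obtain ⟨B, hB⟩ := hub.exists_norm_le
  have hB₀ : 0 ≤ B := (norm_nonneg _).trans (hB _ (mem_range_self 0))
  set r := min 1 δ
  have hr : 0 < r := lt_min one_pos hδ
  have hnear : ∀ z, ‖z‖ < r → ‖u z‖ ≤ C * min 1 (‖z‖ ^ 2) := fun z hz => by
    have hz₁ : ‖z‖ ^ 2 ≤ 1 := pow_le_one₀ (norm_nonneg z) (hz.le.trans (min_le_left _ _))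
    have hzδ : z ∈ Metric.ball 0 δ := mem_ball_zero_iff.2 (hz.trans_le (min_le_right _ _))
    simpa [min_eq_right hz₁] using hball z hzδ
  have hfar : ∀ z, r ≤ ‖z‖ → ‖u z‖ ≤ B / r ^ 2 * min 1 (‖z‖ ^ 2) := fun z hz => by
    have hr₁ : r ^ 2 ≤ 1 := pow_le_one₀ hr.le (min_le_left _ _)
    calc ‖u z‖ ≤ B := hB _ (mem_range_self z)
      _ = B / r ^ 2 * r ^ 2 := by field_simp
      _ ≤ B / r ^ 2 * min 1 (‖z‖ ^ 2) := by gcongr; exact le_min hr₁ (by gcongr)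
  refine (hν.const_mul (max C (B / r ^ 2))).mono' hu (.of_forall fun z => ?_)
  rcases lt_or_ge ‖z‖ r with hz | hz
  · exact (hnear z hz).trans (by gcongr; exact le_max_left _ _)
  · exact (hfar z hz).trans (by gcongr; exact le_max_right _ _)

variable {E F G : Type*} [NormedAddCommGroup E] [NormedSpace ℝ E] [NormedAddCommGroup F]
  [NormedSpace ℝ F] [NormedAddCommGroup G] [NormedSpace ℝ G]

theorem isBigO_sub_sub_fderiv_of_contDiffAt {g : E → G} {x : E} (hg : ContDiffAt ℝ 2 g x) :
    (fun h => g (x + h) - g x - fderiv ℝ g x h) =O[𝓝 0] fun h => ‖h‖ ^ 2 := by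
  have hdiff : ∀ᶠ y in 𝓝 x, DifferentiableAt ℝ g y :=
    (hg.eventually (by simp)).mono fun y hy => hy.differentiableAt (by norm_num)
  have hfderiv : DifferentiableAt ℝ (fderiv ℝ g) x :=
    (hg.fderiv_right (m := 1) (by norm_num)).differentiableAt (by norm_num)
  obtain ⟨C, hC₀, hC⟩ := hfderiv.isBigO_sub.exists_nonneg
  obtain ⟨δ, hδ, hball⟩ := Metric.eventually_nhds_iff_ball.1 (hdiff.and hC.bound)
  refine IsBigO.of_bound C ?_
  filter_upwards [Metric.ball_mem_nhds 0 hδ] with h hh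
  have hsub : ∀ y ∈ Metric.closedBall x ‖h‖, y ∈ Metric.ball x δ :=
    fun y hy => Metric.closedBall_subset_ball (by simpa using hh) hy
  have hbound : ∀ y ∈ Metric.closedBall x ‖h‖, ‖fderiv ℝ g y - fderiv ℝ g x‖ ≤ C * ‖h‖ :=
    fun y hy => (hball y (hsub y hy)).2.trans <|
      mul_le_mul_of_nonneg_left (mem_closedBall_iff_norm.1 hy) hC₀
  have hmean := (convex_closedBall x ‖h‖).norm_image_sub_le_of_norm_fderiv_le' (x := x)
    (y := x + h) (fun y hy => (hball y (hsub y hy)).1) hbound (by simp) (by simp)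
  simpa [pow_two, mul_assoc] using hmean

/-- The increment `g(x + Lz) − g(x) − ⟨∇g(x), Lz⟩ 1_{|z| ≤ 1}` which a jump-type generator
integrates against its Lévy measure; subtracting the linear part for small jumps makes it
integrable. -/
noncomputable def compensatedIncrement (L : F →L[ℝ] E) (g : E → G) (x : E) (z : F) : G :=
  g (x + L z) - g x - indicator {z | ‖z‖ ≤ 1} (fun z => fderiv ℝ g x (L z)) z

theorem isBigO_compensatedIncrement (L : F →L[ℝ] E) {g : E → G} {x : E}
    (hg : ContDiffAt ℝ 2 g x) : compensatedIncrement L g x =O[𝓝 0] fun z => ‖z‖ ^ 2 := by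
  have hL : Tendsto L (𝓝 0) (𝓝 0) := by simpa using L.continuous.tendsto 0
  refine IsBigO.congr' ?_ ?_ .rfl (f₁ := fun z => g (x + L z) - g x - fderiv ℝ g x (L z))
  · exact ((isBigO_sub_sub_fderiv_of_contDiffAt hg).comp_tendsto hL).trans <|
      (L.isBigO_id _).norm_norm.pow 2
  · filter_upwards [Metric.closedBall_mem_nhds (0 : F) one_pos] with z hz
    rw [compensatedIncrement, indicator_of_mem (by simpa using hz)]

theorem isBounded_range_compensatedIncrement (L : F →L[ℝ] E) {g : E → G}
    (hg : IsBounded (range g)) (x : E) : IsBounded (range (compensatedIncrement L g x)) := by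
  obtain ⟨B, hB⟩ := hg.exists_norm_le
  refine (isBounded_iff_forall_norm_le).2 ⟨B + B + ‖(fderiv ℝ g x).comp L‖, ?_⟩
  rintro _ ⟨z, rfl⟩
  have hcomp : ‖indicator {z | ‖z‖ ≤ 1} (fun z => fderiv ℝ g x (L z)) z‖ ≤
      ‖(fderiv ℝ g x).comp L‖ := by
    refine (norm_indicator_eq_indicator_norm _ _).trans_le <|
      indicator_apply_le' (fun hz => ?_) fun _ => norm_nonneg _
    exact ((fderiv ℝ g x).comp L).unit_le_opNorm z hz
  exact (norm_sub_le _ _).trans <| add_le_add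
    (norm_sub_le_of_le (hB _ (mem_range_self _)) (hB _ (mem_range_self _))) hcomp

theorem integrable_compensatedIncrement [MeasurableSpace F] [OpensMeasurableSpace F]
    [SecondCountableTopologyEither F G] {ν : Measure F}
    (hν : Integrable (fun z => min 1 (‖z‖ ^ 2)) ν) (L : F →L[ℝ] E) {g : E → G}
    (hg : Continuous g) (hgb : IsBounded (range g)) {x : E} (hgx : ContDiffAt ℝ 2 g x) :
    Integrable (compensatedIncrement L g x) ν := by
  refine integrable_of_isBigO_norm_sq_of_isBounded_range hν ?_
    (isBigO_compensatedIncrement L hgx) (isBounded_range_compensatedIncrement L hgb x)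
  have hmeas : MeasurableSet {z : F | ‖z‖ ≤ 1} :=
    (isClosed_le continuous_norm continuous_const).measurableSet
  have hinc : Continuous fun z => g (x + L z) - g x := by fun_prop
  have hlin : Continuous fun z => fderiv ℝ g x (L z) := by fun_prop
  exact hinc.aestronglyMeasurable.sub (hlin.aestronglyMeasurable.indicator hmeas)

/-- The operator `ℒg(x) = ⟨∇g(x), b(x)⟩ + ∫ [g(x + Lz) − g(x) − ⟨∇g(x), Lz⟩ 1_{|z| ≤ 1}] ν(dz)`,
with drift `b`, jump coefficient `L` and Lévy measure `ν`. The integral is `0` where the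
compensated increment is not `ν`-integrable. -/
noncomputable def levyGenerator [MeasurableSpace F] (ν : Measure F) (L : F →L[ℝ] E) (b : E → E)
    (g : E → G) (x : E) : G :=
  fderiv ℝ g x (b x) + ∫ z, compensatedIncrement L g x z ∂ν

/-- The Bregman divergence `Ψ_Φ(u, v) = Φ(u) − Φ(v) − Φ'(v)(u − v)`. -/
noncomputable def bregmanDivergence (Φ : ℝ → ℝ) (u v : ℝ) : ℝ :=
  Φ u - Φ v - deriv Φ v * (u - v)

variable {Φ : ℝ → ℝ} {f : E → ℝ} {x : E}

theorem fderiv_comp_eq_deriv_smul_fderiv (hΦ : DifferentiableAt ℝ Φ (f x))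
    (hf : DifferentiableAt ℝ f x) : fderiv ℝ (Φ ∘ f) x = deriv Φ (f x) • fderiv ℝ f x :=
  (hΦ.hasDerivAt.comp_hasFDerivAt x hf.hasFDerivAt).fderiv

theorem compensatedIncrement_comp_sub_deriv_mul_eq_bregmanDivergence (L : F →L[ℝ] E)
    (hΦ : DifferentiableAt ℝ Φ (f x)) (hf : DifferentiableAt ℝ f x) (z : F) :
    compensatedIncrement L (Φ ∘ f) x z - deriv Φ (f x) * compensatedIncrement L f x z =
      bregmanDivergence Φ (f (x + L z)) (f x) := by
  have hcomp : indicator {z | ‖z‖ ≤ 1} (fun z => fderiv ℝ (Φ ∘ f) x (L z)) z =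
      deriv Φ (f x) * indicator {z | ‖z‖ ≤ 1} (fun z => fderiv ℝ f x (L z)) z := by
    rw [fderiv_comp_eq_deriv_smul_fderiv hΦ hf]
    exact indicator_const_mul _ _ _ z
  simp only [compensatedIncrement, bregmanDivergence, hcomp, Function.comp_apply]
  ring

theorem stmt_1_general [MeasurableSpace F] [OpensMeasurableSpace F] {ν : Measure F}
    (hν : ∫⁻ z, ENNReal.ofReal (min 1 (‖z‖ ^ 2)) ∂ν ≠ ⊤) (L : F →L[ℝ] E) (b : E → E)
    (hf : Continuous f) (hfb : IsBounded (range f)) (hΦ : ContinuousOn Φ (closure (range f)))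
    (hfx : ContDiffAt ℝ 2 f x) (hΦx : ContDiffAt ℝ 2 Φ (f x)) :
    Integrable (compensatedIncrement L f x) ν ∧
    Integrable (compensatedIncrement L (Φ ∘ f) x) ν ∧
    Integrable (fun z => bregmanDivergence Φ (f (x + L z)) (f x)) ν ∧
    levyGenerator ν L b (Φ ∘ f) x - deriv Φ (f x) * levyGenerator ν L b f x =
      ∫ z, bregmanDivergence Φ (f (x + L z)) (f x) ∂ν := by
  have hν' : Integrable (fun z => min 1 (‖z‖ ^ 2)) ν :=
    (lintegral_ofReal_ne_top_iff_integrable (by fun_prop) (.of_forall fun z => by positivity)).1 hν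
  have hΦf : Continuous (Φ ∘ f) := hΦ.comp_continuous hf fun y => subset_closure ⟨y, rfl⟩
  have hΦfb : IsBounded (range (Φ ∘ f)) :=
    (hfb.isCompact_closure.image_of_continuousOn hΦ).isBounded.subset <|
      (range_comp Φ f).trans_subset (image_mono subset_closure)
  have hΦd : DifferentiableAt ℝ Φ (f x) := hΦx.differentiableAt two_ne_zero
  have hfd : DifferentiableAt ℝ f x := hfx.differentiableAt two_ne_zero
  have hintf := integrable_compensatedIncrement hν' L hf hfb hfx
  have hintΦf := integrable_compensatedIncrement hν' L hΦf hΦfb (hΦx.comp x hfx)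
  simp only [← compensatedIncrement_comp_sub_deriv_mul_eq_bregmanDivergence L hΦd hfd]
  refine ⟨hintf, hintΦf, hintΦf.sub (hintf.const_mul _), ?_⟩
  rw [integral_sub hintΦf (hintf.const_mul _), integral_const_mul, levyGenerator, levyGenerator,
    fderiv_comp_eq_deriv_smul_fderiv hΦd hfd, smul_apply, smul_eq_mul]
  ring

end CompensatedIncrement

/-- The carré-du-champ identity (formula (W3)) for the generator
`ℒf(x) = ⟨∇f(x), b(x)⟩ + ∫ [f(x+σz) − f(x) − ⟨∇f(x), σz⟩ 1_{|z|≤1}] ν(dz)`: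
for a positive `C²` function `f` which is constant outside a compact set,
all integrals converge absolutely and
`ℒ(Φ∘f)(x) − Φ'(f(x))·ℒf(x) = ∫ Ψ_Φ(f(x+σz), f(x)) ν(dz)`. -/
theorem stmt_1 (d : ℕ) (hd : 1 ≤ d)
    (ν : Measure (EuclideanSpace ℝ (Fin d)))
    (hν : ∫⁻ z, ENNReal.ofReal (min 1 (‖z‖ ^ 2)) ∂ν ≠ ⊤)
    (σ : Matrix (Fin d) (Fin d) ℝ) (hσ : IsUnit σ)
    (b : EuclideanSpace ℝ (Fin d) → EuclideanSpace ℝ (Fin d))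
    (Φ : ℝ → ℝ) (hΦc : ContinuousOn Φ (Set.Ici 0)) (hΦ : ContDiffOn ℝ 2 Φ (Set.Ioi 0))
    (f : EuclideanSpace ℝ (Fin d) → ℝ) (hf : ContDiff ℝ 2 f) (hfpos : ∀ x, 0 < f x)
    (hfc : ∃ (K : Set (EuclideanSpace ℝ (Fin d))) (c : ℝ), IsCompact K ∧ ∀ x ∉ K, f x = c)
    (x : EuclideanSpace ℝ (Fin d)) :
    Integrable (fun z => f (x + Matrix.toEuclideanLin σ z) - f x -
        Set.indicator {z | ‖z‖ ≤ 1}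
          (fun z => fderiv ℝ f x (Matrix.toEuclideanLin σ z)) z) ν ∧
    Integrable (fun z => Φ (f (x + Matrix.toEuclideanLin σ z)) - Φ (f x) -
        Set.indicator {z | ‖z‖ ≤ 1}
          (fun z => fderiv ℝ (fun y => Φ (f y)) x (Matrix.toEuclideanLin σ z)) z) ν ∧
    Integrable (fun z => Φ (f (x + Matrix.toEuclideanLin σ z)) - Φ (f x) -
        deriv Φ (f x) * (f (x + Matrix.toEuclideanLin σ z) - f x)) ν ∧
    (fderiv ℝ (fun y => Φ (f y)) x (b x) +
        ∫ z, (Φ (f (x + Matrix.toEuclideanLin σ z)) - Φ (f x) -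
          Set.indicator {z | ‖z‖ ≤ 1}
            (fun z => fderiv ℝ (fun y => Φ (f y)) x (Matrix.toEuclideanLin σ z)) z) ∂ν)
      - deriv Φ (f x) * (fderiv ℝ f x (b x) +
        ∫ z, (f (x + Matrix.toEuclideanLin σ z) - f x -
          Set.indicator {z | ‖z‖ ≤ 1}
            (fun z => fderiv ℝ f x (Matrix.toEuclideanLin σ z)) z) ∂ν)
      = ∫ z, (Φ (f (x + Matrix.toEuclideanLin σ z)) - Φ (f x) -
          deriv Φ (f x) * (f (x + Matrix.toEuclideanLin σ z) - f x)) ∂ν := by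
  obtain ⟨K, c, hK, hc⟩ := hfc
  exact stmt_1_general hν (Matrix.toEuclideanLin σ).toContinuousLinearMap b hf.continuous
    (isCompact_range_of_eqOn_compl_const hf.continuous.continuousOn hK hc).isBounded
    (hΦc.mono <| closure_minimal (Set.range_subset_iff.2 fun y => (hfpos y).le) isClosed_Ici)
    hf.contDiffAt (hΦ.contDiffAt (Ioi_mem_nhds (hfpos x)))
end

section
/- Let d ≥ 1, α ∈ (0,2), κ₁, κ₂ > 0, λ₁, λ₂ ∈ ℝ, and t ≥ 0. Let ν be the measure on ℝ^d given by ν(dz) = n(z) dz where n is measurable with κ₁/|z|^{d+α} ≤ n(z) ≤ κ₂/|z|^{d+α} for all z ≠ 0. Let ψ : ℝ^d → ℝ^d be a C¹ diffeomorphism such that |det Dψ(z)| ≥ e^{λ₁ t d} for all z and |ψ(z)| ≤ e^{λ₂ t}|z| for all z. Then the pushforward measure ν∘ψ^{-1} satisfies ν∘ψ^{-1} ≤ (κ₂/κ₁) · e^{(λ₂(d+α) − λ₁ d) t} · ν, i.e. (ν∘ψ^{-1})(A) ≤ (κ₂/κ₁) e^{(λ₂(d+α) − λ₁ d) t} ν(A)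 for every Borel set A ⊆ ℝ^d. -/
open MeasureTheory

/-!
By the change of variables formula, `∫_{ψ⁻¹ A} f ≤ ∫_A g` follows from the pointwise bound
`f ≤ |det Dψ| · (g ∘ ψ)`. For a density comparable to `‖z‖ ^ (-p)`, the growth bound
`‖ψ z‖ ≤ b ‖z‖` costs a factor `b ^ p` when passing from `z` to `ψ z`, and the Jacobian bound
`a ≤ |det Dψ|` gains a factor `a`.
-/

theorem div_rpow_le_rpow_mul_div_rpow {κ b p x y : ℝ} (hκ : 0 ≤ κ) (hp : 0 ≤ p)
    (hx : 0 < x) (hy : 0 < y) (hyx : y ≤ b * x) :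
    κ / x ^ p ≤ b ^ p * (κ / y ^ p) := by
  have hb : 0 < b := pos_of_mul_pos_left (hy.trans_le hyx) hx.le
  have hpow : y ^ p ≤ b ^ p * x ^ p :=
    (Real.rpow_le_rpow hy.le hyx hp).trans_eq (Real.mul_rpow hb.le hx.le)
  rw [← mul_div_assoc, div_le_div_iff₀ (Real.rpow_pos_of_pos hx p) (Real.rpow_pos_of_pos hy p)]
  calc κ * y ^ p ≤ κ * (b ^ p * x ^ p) := mul_le_mul_of_nonneg_left hpow hκ
    _ = b ^ p * κ * x ^ p := by ring

theorem le_mul_rpow_mul_of_div_rpow_le {κ₁ κ₂ b p x y u v : ℝ} (hκ₁ : 0 < κ₁) (hκ₂ : 0 ≤ κ₂)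
    (hp : 0 ≤ p) (hx : 0 < x) (hy : 0 < y) (hyx : y ≤ b * x)
    (hv : κ₁ / y ^ p ≤ v) (hu : u ≤ κ₂ / x ^ p) :
    u ≤ κ₂ / κ₁ * b ^ p * v := by
  have hb : 0 < b := pos_of_mul_pos_left (hy.trans_le hyx) hx.le
  calc u ≤ κ₂ / x ^ p := hu
    _ ≤ b ^ p * (κ₂ / y ^ p) := div_rpow_le_rpow_mul_div_rpow hκ₂ hp hx hy hyx
    _ = κ₂ / κ₁ * b ^ p * (κ₁ / y ^ p) := by field_simp
    _ ≤ κ₂ / κ₁ * b ^ p * v := by gcongr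

section

variable {E : Type*} [NormedAddCommGroup E] [NormedSpace ℝ E] [FiniteDimensional ℝ E]
  [MeasurableSpace E] [BorelSpace E] (μ : Measure E) [μ.IsAddHaarMeasure]

theorem map_withDensity_le_withDensity_of_le_abs_det_mul_comp
    {ψ : E → E} {ψ' : E → E →L[ℝ] E} {f g : E → ENNReal}
    (hψ : ∀ z, HasFDerivAt ψ (ψ' z) z) (hinj : Function.Injective ψ)
    (hfg : ∀ᵐ z ∂μ, f z ≤ ENNReal.ofReal |(ψ' z).det| * g (ψ z)) :
    (μ.withDensity f).map ψ ≤ μ.withDensity g := by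
  have hmeas : Measurable ψ :=
    (continuous_iff_continuousAt.2 fun z => (hψ z).continuousAt).measurable
  refine Measure.le_iff.2 fun A hA => ?_
  calc (μ.withDensity f).map ψ A
      = ∫⁻ z in ψ ⁻¹' A, f z ∂μ := by
        rw [Measure.map_apply hmeas hA, withDensity_apply _ (hmeas hA)]
    _ ≤ ∫⁻ z in ψ ⁻¹' A, ENNReal.ofReal |(ψ' z).det| * g (ψ z) ∂μ :=
        lintegral_mono_ae (ae_restrict_of_ae hfg)
    _ = ∫⁻ w in ψ '' (ψ ⁻¹' A), g w ∂μ :=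
        (lintegral_image_eq_lintegral_abs_det_fderiv_mul μ (hmeas hA)
          (fun z _ => (hψ z).hasFDerivWithinAt) hinj.injOn g).symm
    _ ≤ ∫⁻ w in A, g w ∂μ := lintegral_mono_set (Set.image_preimage_subset ψ A)
    _ = μ.withDensity g A := (withDensity_apply g hA).symm

theorem stmt_5_general [Nontrivial E] {κ₁ κ₂ a b p : ℝ}
    (hκ₁ : 0 < κ₁) (hκ₂ : 0 ≤ κ₂) (ha : 0 < a) (hb : 0 ≤ b) (hp : 0 ≤ p) {n : E → ℝ}
    (hlower : ∀ z, z ≠ 0 → κ₁ / ‖z‖ ^ p ≤ n z) (hupper : ∀ z, z ≠ 0 → n z ≤ κ₂ / ‖z‖ ^ p)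
    {ψ : E → E} (hψ : Differentiable ℝ ψ) (hinj : Function.Injective ψ)
    (hdet : ∀ z, a ≤ |(fderiv ℝ ψ z).det|) (hgrow : ∀ z, ‖ψ z‖ ≤ b * ‖z‖) :
    (μ.withDensity fun z => ENNReal.ofReal (n z)).map ψ ≤
      ENNReal.ofReal (κ₂ / κ₁ * (b ^ p / a)) • μ.withDensity fun z => ENNReal.ofReal (n z) := by
  have hψ0 : ψ 0 = 0 := by simpa using hgrow 0
  have hC : 0 ≤ κ₂ / κ₁ * (b ^ p / a) := by positivity
  have hdensity (z : E) (hz : z ≠ 0) :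
      n z ≤ |(fderiv ℝ ψ z).det| * (κ₂ / κ₁ * (b ^ p / a) * n (ψ z)) := by
    have hψz : ψ z ≠ 0 := (hinj.ne_iff' hψ0).2 hz
    have hnonneg : 0 ≤ n (ψ z) := le_trans (by positivity) (hlower (ψ z) hψz)
    calc n z ≤ κ₂ / κ₁ * b ^ p * n (ψ z) :=
          le_mul_rpow_mul_of_div_rpow_le hκ₁ hκ₂ hp (norm_pos_iff.2 hz) (norm_pos_iff.2 hψz)
            (hgrow z) (hlower _ hψz) (hupper z hz)
      _ = a * (κ₂ / κ₁ * (b ^ p / a) * n (ψ z)) := by field_simp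
      _ ≤ |(fderiv ℝ ψ z).det| * (κ₂ / κ₁ * (b ^ p / a) * n (ψ z)) :=
          mul_le_mul_of_nonneg_right (hdet z) (mul_nonneg hC hnonneg)
  rw [← withDensity_smul' _ _ ENNReal.ofReal_ne_top]
  refine map_withDensity_le_withDensity_of_le_abs_det_mul_comp μ
    (fun z => (hψ z).hasFDerivAt) hinj ?_
  filter_upwards [Measure.ae_ne μ 0] with z hz
  rw [Pi.smul_apply, smul_eq_mul, ← ENNReal.ofReal_mul hC, ← ENNReal.ofReal_mul (abs_nonneg _)]
  exact ENNReal.ofReal_le_ofReal (hdensity z hz)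

end

/-- Pushforward density estimate for α-stable-like Lévy measures: if
`κ₁/|z|^{d+α} ≤ dν/dz ≤ κ₂/|z|^{d+α}` and `ψ` is a `C¹` diffeomorphism with
`|det Dψ| ≥ e^{λ₁ t d}` and `|ψ(z)| ≤ e^{λ₂ t}|z|`, then
`ν∘ψ⁻¹ ≤ (κ₂/κ₁) e^{(λ₂(d+α) − λ₁ d)t} ν`. -/
theorem stmt_5 (d : ℕ) (hd : 1 ≤ d) (α κ₁ κ₂ lam1 lam2 t : ℝ)
    (hα : α ∈ Set.Ioo (0:ℝ) 2) (hκ₁ : 0 < κ₁) (hκ₂ : 0 < κ₂) (ht : 0 ≤ t)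
    (n : EuclideanSpace ℝ (Fin d) → ℝ) (hn : Measurable n)
    (hn1 : ∀ z : EuclideanSpace ℝ (Fin d), z ≠ 0 → κ₁ / ‖z‖ ^ ((d : ℝ) + α) ≤ n z)
    (hn2 : ∀ z : EuclideanSpace ℝ (Fin d), z ≠ 0 → n z ≤ κ₂ / ‖z‖ ^ ((d : ℝ) + α))
    (ψ : EuclideanSpace ℝ (Fin d) ≃ EuclideanSpace ℝ (Fin d))
    (hψ : ContDiff ℝ 1 (⇑ψ)) (hψinv : ContDiff ℝ 1 (⇑ψ.symm))
    (hdet : ∀ z, Real.exp (lam1 * t * d) ≤ |LinearMap.det (fderiv ℝ (⇑ψ) z).toLinearMap|)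
    (hgrow : ∀ z, ‖ψ z‖ ≤ Real.exp (lam2 * t) * ‖z‖) :
    ∀ A : Set (EuclideanSpace ℝ (Fin d)), MeasurableSet A →
      Measure.map (⇑ψ) (volume.withDensity fun z => ENNReal.ofReal (n z)) A ≤
        ENNReal.ofReal (κ₂ / κ₁ * Real.exp ((lam2 * ((d : ℝ) + α) - lam1 * d) * t)) *
          (volume.withDensity fun z => ENNReal.ofReal (n z)) A := by
  intro A _
  have : NeZero d := ⟨Nat.one_le_iff_ne_zero.1 hd⟩
  have hp : 0 ≤ (d : ℝ) + α := add_nonneg d.cast_nonneg hα.1.le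
  have hconst : Real.exp (lam2 * t) ^ ((d : ℝ) + α) / Real.exp (lam1 * t * d) =
      Real.exp ((lam2 * ((d : ℝ) + α) - lam1 * d) * t) := by
    rw [← Real.exp_mul, ← Real.exp_sub]
    ring_nf
  rw [← hconst]
  exact stmt_5_general volume hκ₁ hκ₂.le (Real.exp_pos _) (Real.exp_pos _).le hp hn1 hn2
    (hψ.differentiable one_ne_zero) ψ.injective hdet hgrow A
end

section
/- Let d ≥ 1, α ∈ (0,2), κ₁, κ₂ > 0, λ₁ ∈ ℝ, λ₂ ≤ 0, and t ≥ 0. Let ρ : (0,∞) → [0,∞) be nonincreasing and let ν be the measure on ℝ^d given by ν(dz) = n(z) dz where n is measurable with κ₁ρ(|z|)/|z|^{d+α} ≤ n(z) ≤ κ₂ρ(|z|)/|z|^{d+α} for all z ≠ 0. Let ψ : ℝ^d → ℝ^d be a C¹ diffeomorphism such that |det Dψ(z)| ≥ e^{λ₁ t d} for all z and |ψ(z)| ≤ e^{λ₂ t}|z| for all z. Then ν∘ψ^{-1} ≤ (κ₂/κ₁) · e^{(λ₂(d+α) − λ₁ d) t} · ν. -/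
open MeasureTheory

/-!
By the change of variables formula, the image of `f dμ` under an injective differentiable map `ψ` is
at most `c • f dμ` as soon as `f ≤ c |det Dψ| f ∘ ψ` almost everywhere. For a density comparable to
`ρ(|z|) / |z| ^ p` with `ρ` nonincreasing, contracting distances to the origin by a factor `b ≤ 1`
does not decrease `ρ` and gains `b ^ p` from the power, while `|det Dψ| ≥ a` costs `1 / a`.
-/

theorem map_withDensity_le_smul {E : Type*} [NormedAddCommGroup E] [NormedSpace ℝ E]
    [FiniteDimensional ℝ E] [MeasurableSpace E] [BorelSpace E] (μ : Measure E)
    [μ.IsAddHaarMeasure] {ψ : E → E} {ψ' : E → E →L[ℝ] E} {f : E → ENNReal} {c : ENNReal}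
    (hψ : ∀ x, HasFDerivAt ψ (ψ' x) x) (hinj : Function.Injective ψ) (hc : c ≠ ⊤)
    (hf : ∀ᵐ x ∂μ, f x ≤ c * (ENNReal.ofReal |(ψ' x).det| * f (ψ x))) :
    (μ.withDensity f).map ψ ≤ c • μ.withDensity f := by
  have hmeas : Measurable ψ :=
    (continuous_iff_continuousAt.2 fun x ↦ (hψ x).continuousAt).measurable
  refine Measure.le_iff.2 fun A hA ↦ ?_
  have hpre : MeasurableSet (ψ ⁻¹' A) := hmeas hA
  rw [Measure.map_apply hmeas hA, Measure.smul_apply, smul_eq_mul,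
    withDensity_apply _ hpre, withDensity_apply _ hA]
  calc ∫⁻ x in ψ ⁻¹' A, f x ∂μ
      ≤ ∫⁻ x in ψ ⁻¹' A, c * (ENNReal.ofReal |(ψ' x).det| * f (ψ x)) ∂μ :=
        lintegral_mono_ae (ae_restrict_of_ae hf)
    _ = c * ∫⁻ x in ψ ⁻¹' A, ENNReal.ofReal |(ψ' x).det| * f (ψ x) ∂μ :=
        lintegral_const_mul' _ _ hc
    _ = c * ∫⁻ y in ψ '' (ψ ⁻¹' A), f y ∂μ := by
        rw [lintegral_image_eq_lintegral_abs_det_fderiv_mul μ hpre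
          (fun x _ ↦ (hψ x).hasFDerivWithinAt) hinj.injOn]
    _ ≤ c * ∫⁻ y in A, f y ∂μ := by
        gcongr
        exact Set.image_preimage_subset ψ A

theorem div_rpow_le_of_antitoneOn {ρ : ℝ → ℝ} (hρ : AntitoneOn ρ (Set.Ioi 0)) {b p r s : ℝ}
    (hb : b ≤ 1) (hp : 0 ≤ p) (hr : 0 < r) (hs : 0 < s) (hsr : s ≤ b * r) (hρr : 0 ≤ ρ r) :
    ρ r / r ^ p ≤ b ^ p * (ρ s / s ^ p) := by
  have hb0 : 0 < b := pos_of_mul_pos_left (hs.trans_le hsr) hr.le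
  have hρle : ρ r ≤ ρ s := hρ hs hr (hsr.trans (mul_le_of_le_one_left hr.le hb))
  have hpow : s ^ p ≤ b ^ p * r ^ p := by
    rw [← Real.mul_rpow hb0.le hr.le]
    exact Real.rpow_le_rpow hs.le hsr hp
  calc ρ r / r ^ p = b ^ p * (ρ r / (b ^ p * r ^ p)) := by field_simp
    _ ≤ b ^ p * (ρ s / s ^ p) := by gcongr; exact hρr.trans hρle

theorem le_mul_of_antitoneOn_div_rpow_bounds {ρ : ℝ → ℝ} (hρ : AntitoneOn ρ (Set.Ioi 0))
    {b p r s u v κ₁ κ₂ : ℝ} (hb : b ≤ 1) (hp : 0 ≤ p) (hκ₁ : 0 < κ₁) (hκ₂ : 0 ≤ κ₂)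
    (hr : 0 < r) (hs : 0 < s) (hsr : s ≤ b * r) (hρr : 0 ≤ ρ r)
    (hu : u ≤ κ₂ * ρ r / r ^ p) (hv : κ₁ * ρ s / s ^ p ≤ v) :
    u ≤ κ₂ / κ₁ * b ^ p * v := by
  have hb0 : 0 < b := pos_of_mul_pos_left (hs.trans_le hsr) hr.le
  calc u ≤ κ₂ * (ρ r / r ^ p) := hu.trans_eq (mul_div_assoc ..)
    _ ≤ κ₂ * (b ^ p * (ρ s / s ^ p)) := by
        gcongr
        exact div_rpow_le_of_antitoneOn hρ hb hp hr hs hsr hρr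
    _ = κ₂ / κ₁ * b ^ p * (κ₁ * ρ s / s ^ p) := by field_simp
    _ ≤ κ₂ / κ₁ * b ^ p * v := by gcongr

theorem stmt_6_general {E : Type*} [NormedAddCommGroup E] [NormedSpace ℝ E]
    [FiniteDimensional ℝ E] [Nontrivial E] [MeasurableSpace E] [BorelSpace E] (μ : Measure E)
    [μ.IsAddHaarMeasure] {a b p κ₁ κ₂ : ℝ} (ha : 0 < a) (hb : b ≤ 1) (hp : 0 ≤ p)
    (hκ₁ : 0 < κ₁) (hκ₂ : 0 ≤ κ₂)
    {ρ : ℝ → ℝ} (hρ : ∀ s, 0 < s → 0 ≤ ρ s) (hρmono : AntitoneOn ρ (Set.Ioi 0))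
    {n : E → ℝ} (hn1 : ∀ z, z ≠ 0 → κ₁ * ρ ‖z‖ / ‖z‖ ^ p ≤ n z)
    (hn2 : ∀ z, z ≠ 0 → n z ≤ κ₂ * ρ ‖z‖ / ‖z‖ ^ p)
    {ψ : E → E} {ψ' : E → E →L[ℝ] E} (hψ : ∀ z, HasFDerivAt ψ (ψ' z) z)
    (hinj : Function.Injective ψ) (hdet : ∀ z, a ≤ |(ψ' z).det|)
    (hgrow : ∀ z, ‖ψ z‖ ≤ b * ‖z‖) :
    (μ.withDensity fun z ↦ ENNReal.ofReal (n z)).map ψ ≤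
      ENNReal.ofReal (κ₂ / κ₁ * (b ^ p / a)) • μ.withDensity fun z ↦ ENNReal.ofReal (n z) := by
  refine map_withDensity_le_smul μ hψ hinj ENNReal.ofReal_ne_top ?_
  have hψ0 : ψ 0 = 0 := by simpa using hgrow 0
  filter_upwards [Measure.ae_ne μ 0] with x hx
  have hψx : ψ x ≠ 0 := fun h ↦ hx (hinj (h.trans hψ0.symm))
  have hx0 : 0 < ‖x‖ := norm_pos_iff.2 hx
  have hψx0 : 0 < ‖ψ x‖ := norm_pos_iff.2 hψx
  have hb0 : 0 < b := pos_of_mul_pos_left (hψx0.trans_le (hgrow x)) hx0.le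
  have hnψx : 0 ≤ n (ψ x) := by
    have := hρ _ hψx0
    exact le_trans (by positivity) (hn1 _ hψx)
  rw [← ENNReal.ofReal_mul (abs_nonneg _), ← ENNReal.ofReal_mul (by positivity)]
  refine ENNReal.ofReal_le_ofReal ?_
  calc n x ≤ κ₂ / κ₁ * b ^ p * n (ψ x) :=
        le_mul_of_antitoneOn_div_rpow_bounds hρmono hb hp hκ₁ hκ₂ hx0 hψx0 (hgrow x) (hρ _ hx0)
          (hn2 x hx) (hn1 _ hψx)
    _ = κ₂ / κ₁ * (b ^ p / a) * (a * n (ψ x)) := by field_simp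
    _ ≤ κ₂ / κ₁ * (b ^ p / a) * (|(ψ' x).det| * n (ψ x)) := by gcongr; exact hdet x

/-- Pushforward density estimate, small-jump case: if
`κ₁ρ(|z|)/|z|^{d+α} ≤ dν/dz ≤ κ₂ρ(|z|)/|z|^{d+α}` with `ρ` nonincreasing, `λ₂ ≤ 0`,
and `ψ` is a `C¹` diffeomorphism with `|det Dψ| ≥ e^{λ₁ t d}` and
`|ψ(z)| ≤ e^{λ₂ t}|z|`, then `ν∘ψ⁻¹ ≤ (κ₂/κ₁) e^{(λ₂(d+α) − λ₁ d)t} ν`. -/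
theorem stmt_6 (d : ℕ) (hd : 1 ≤ d) (α κ₁ κ₂ lam1 lam2 t : ℝ)
    (hα : α ∈ Set.Ioo (0:ℝ) 2) (hκ₁ : 0 < κ₁) (hκ₂ : 0 < κ₂)
    (hlam2 : lam2 ≤ 0) (ht : 0 ≤ t)
    (ρ : ℝ → ℝ) (hρ : ∀ s, 0 < s → 0 ≤ ρ s) (hρmono : AntitoneOn ρ (Set.Ioi 0))
    (n : EuclideanSpace ℝ (Fin d) → ℝ) (hn : Measurable n)
    (hn1 : ∀ z : EuclideanSpace ℝ (Fin d), z ≠ 0 →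
      κ₁ * ρ ‖z‖ / ‖z‖ ^ ((d : ℝ) + α) ≤ n z)
    (hn2 : ∀ z : EuclideanSpace ℝ (Fin d), z ≠ 0 →
      n z ≤ κ₂ * ρ ‖z‖ / ‖z‖ ^ ((d : ℝ) + α))
    (ψ : EuclideanSpace ℝ (Fin d) ≃ EuclideanSpace ℝ (Fin d))
    (hψ : ContDiff ℝ 1 (⇑ψ)) (hψinv : ContDiff ℝ 1 (⇑ψ.symm))
    (hdet : ∀ z, Real.exp (lam1 * t * d) ≤ |LinearMap.det (fderiv ℝ (⇑ψ) z).toLinearMap|)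
    (hgrow : ∀ z, ‖ψ z‖ ≤ Real.exp (lam2 * t) * ‖z‖) :
    ∀ A : Set (EuclideanSpace ℝ (Fin d)), MeasurableSet A →
      Measure.map (⇑ψ) (volume.withDensity fun z => ENNReal.ofReal (n z)) A ≤
        ENNReal.ofReal (κ₂ / κ₁ * Real.exp ((lam2 * ((d : ℝ) + α) - lam1 * d) * t)) *
          (volume.withDensity fun z => ENNReal.ofReal (n z)) A := by
  have : Nonempty (Fin d) := Fin.pos_iff_nonempty.1 hd
  have hexponent : (lam2 * ((d : ℝ) + α) - lam1 * d) * t =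
      lam2 * t * ((d : ℝ) + α) - lam1 * t * d := by ring
  intro A _
  rw [hexponent, Real.exp_sub, Real.exp_mul (lam2 * t)]
  exact stmt_6_general volume (Real.exp_pos _)
    (Real.exp_le_one_iff.2 (mul_nonpos_of_nonpos_of_nonneg hlam2 ht))
    (add_nonneg d.cast_nonneg hα.1.le) hκ₁ hκ₂.le hρ hρmono hn1 hn2
    (fun z ↦ (hψ.differentiable one_ne_zero z).hasFDerivAt) ψ.injective hdet hgrow A
end

section
/- Let d ≥ 1, λ < 0, δ ≥ 0, and let b, b̃ : ℝ^d → ℝ^d satisfy ⟨b(u) − b(v), u − v⟩ ≤ λ|u − v|² for all u, v ∈ ℝ^d and sup_{u∈ℝ^d} |b(u) − b̃(u)| ≤ δ. Let x, y : [0,∞) → ℝ^d be differentiable with x'(t) − y'(t) = b(x(t)) − b̃(y(t)) for all t ≥ 0 and x(0) = y(0). Then |x(t) − y(t)| ≤ δ/(−λ) for all t ≥ 0. -/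
open scoped RealInnerProductSpace

/-!
A Grönwall inequality that uses only the radial part `⟪f, f'⟫` of the derivative: with
`B' = K B + ε`, the function `‖f‖ ^ 2` cannot cross `B ^ 2`, since at a contact point
`2 ⟪f, f'⟫ ≤ 2 (K B ^ 2 + ε B) = (B ^ 2)'`. The fencing argument needs this inequality to be strict
and `B` to be positive there, so `ε` and the initial value are first raised by a small `η > 0`.
For two trajectories `x`, `y`, splitting `b(x) - b̃(y)` as `(b(x) - b(y)) + (b(y) - b̃(y))` gives
such a radial bound on `x - y`. When `K < 0`, the point `ε / (-K)` is the equilibrium of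
`B' = K B + ε`.
-/

open Set Filter Topology

theorem gronwallBound_pos {δ K ε x : ℝ} (hδ : 0 < δ) (hε : 0 ≤ ε) (hx : 0 ≤ x) :
    0 < gronwallBound δ K ε x := by
  rcases lt_trichotomy K 0 with hK | rfl | hK
  · have hexp : Real.exp (K * x) ≤ 1 :=
      Real.exp_le_one_iff.2 (mul_nonpos_of_nonpos_of_nonneg hK.le hx)
    rw [gronwallBound_of_K_ne_0 hK.ne]
    exact add_pos_of_pos_of_nonneg (by positivity) <|
      mul_nonneg_of_nonpos_of_nonpos (div_nonpos_of_nonneg_of_nonpos hε hK.le)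
        (sub_nonpos.2 hexp)
  · rw [gronwallBound_K0]
    positivity
  · have hexp : 1 ≤ Real.exp (K * x) := Real.one_le_exp (by positivity)
    rw [gronwallBound_of_K_ne_0 hK.ne']
    exact add_pos_of_pos_of_nonneg (by positivity) <|
      mul_nonneg (by positivity) (sub_nonneg.2 hexp)

theorem gronwallBound_le_div_neg {δ K ε : ℝ} (hK : K < 0) (hδ : δ ≤ ε / (-K)) (x : ℝ) :
    gronwallBound δ K ε x ≤ ε / (-K) := by
  rw [gronwallBound_of_K_ne_0 hK.ne]
  calc δ * Real.exp (K * x) + ε / K * (Real.exp (K * x) - 1)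
    _ ≤ ε / (-K) * Real.exp (K * x) + ε / K * (Real.exp (K * x) - 1) := by gcongr
    _ = ε / (-K) := by rw [div_neg]; ring

theorem continuous_gronwallBound_add_add (δ K ε x : ℝ) :
    Continuous fun η => gronwallBound (δ + η) K (ε + η) x := by
  unfold gronwallBound
  split_ifs <;> fun_prop

section InnerProductSpace

variable {E : Type*} [NormedAddCommGroup E] [InnerProductSpace ℝ E]

theorem norm_le_of_inner_deriv_right_lt_deriv_boundary {f f' : ℝ → E} {B B' : ℝ → ℝ} {a b : ℝ}
    (hf : ContinuousOn f (Icc a b)) (hf' : ∀ t ∈ Ico a b, HasDerivWithinAt f (f' t) (Ici t) t)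
    (ha : ‖f a‖ ≤ B a) (hB : ∀ t, HasDerivAt B (B' t) t) (hB_nonneg : ∀ t ∈ Icc a b, 0 ≤ B t)
    (bound : ∀ t ∈ Ico a b, ‖f t‖ = B t → ⟪f t, f' t⟫ < B t * B' t) :
    ∀ t ∈ Icc a b, ‖f t‖ ≤ B t := by
  intro t ht
  have norm_sq_le : ‖f t‖ ^ 2 ≤ B t ^ 2 := by
    refine image_le_of_deriv_right_lt_deriv_boundary (f := fun s => ‖f s‖ ^ 2)
      (hf.norm.pow 2) (fun s hs => (hf' s hs).norm_sq) (by gcongr)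
      (fun s => (hB s).fun_pow 2) (fun s hs hcontact => ?_) ht
    have hnorm : ‖f s‖ = B s :=
      (sq_eq_sq₀ (norm_nonneg _) (hB_nonneg s (Ico_subset_Icc_self hs))).1 hcontact
    linear_combination 2 * bound s hs hnorm
  exact (sq_le_sq₀ (norm_nonneg _) (hB_nonneg t ht)).1 norm_sq_le

theorem norm_le_gronwallBound_of_inner_deriv_right_le {f f' : ℝ → E} {δ K ε : ℝ} {a b : ℝ}
    (hf : ContinuousOn f (Icc a b)) (hf' : ∀ t ∈ Ico a b, HasDerivWithinAt f (f' t) (Ici t) t)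
    (ha : ‖f a‖ ≤ δ) (hε : 0 ≤ ε)
    (bound : ∀ t ∈ Ico a b, ⟪f t, f' t⟫ ≤ K * ‖f t‖ ^ 2 + ε * ‖f t‖) :
    ∀ t ∈ Icc a b, ‖f t‖ ≤ gronwallBound δ K ε (t - a) := by
  intro t ht
  have perturbed_bound (η : ℝ) (hη : 0 < η) :
      ‖f t‖ ≤ gronwallBound (δ + η) K (ε + η) (t - a) := by
    have hB_pos : ∀ s ∈ Icc a b, 0 < gronwallBound (δ + η) K (ε + η) (s - a) := fun s hs =>
      gronwallBound_pos (add_pos_of_nonneg_of_pos ((norm_nonneg _).trans ha) hη)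
        (by positivity) (sub_nonneg.2 hs.1)
    refine norm_le_of_inner_deriv_right_lt_deriv_boundary hf hf' ?_
      (fun s => hasDerivAt_gronwallBound_shift (δ + η) K (ε + η) s a)
      (fun s hs => (hB_pos s hs).le) (fun s hs hcontact => ?_) t ht
    · rw [sub_self, gronwallBound_x0]
      linarith
    · have hnorm_pos : 0 < ‖f s‖ := hcontact ▸ hB_pos s (Ico_subset_Icc_self hs)
      rw [← hcontact]
      calc ⟪f s, f' s⟫
        _ ≤ K * ‖f s‖ ^ 2 + ε * ‖f s‖ := bound s hs
        _ < K * ‖f s‖ ^ 2 + (ε + η) * ‖f s‖ := by gcongr; exact lt_add_of_pos_right ε hη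
        _ = ‖f s‖ * (K * ‖f s‖ + (ε + η)) := by ring
  have tendsto_bound : Tendsto (fun η => gronwallBound (δ + η) K (ε + η) (t - a)) (𝓝[>] 0)
      (𝓝 (gronwallBound δ K ε (t - a))) := by
    simpa only [add_zero] using
      ((continuous_gronwallBound_add_add δ K ε (t - a)).tendsto 0).mono_left nhdsWithin_le_nhds
  exact ge_of_tendsto tendsto_bound (eventually_mem_nhdsWithin.mono perturbed_bound)

theorem inner_sub_le_of_inner_sub_le_of_norm_sub_le {b btilde : E → E} {K ε : ℝ} {u v : E}
    (hb : ⟪b u - b v, u - v⟫ ≤ K * ‖u - v‖ ^ 2) (hclose : ‖b v - btilde v‖ ≤ ε) :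
    ⟪u - v, b u - btilde v⟫ ≤ K * ‖u - v‖ ^ 2 + ε * ‖u - v‖ :=
  calc ⟪u - v, b u - btilde v⟫
    _ = ⟪b u - b v, u - v⟫ + ⟪b v - btilde v, u - v⟫ := by
      rw [← inner_add_left, sub_add_sub_cancel, real_inner_comm]
    _ ≤ K * ‖u - v‖ ^ 2 + ‖b v - btilde v‖ * ‖u - v‖ := add_le_add hb (real_inner_le_norm _ _)
    _ ≤ K * ‖u - v‖ ^ 2 + ε * ‖u - v‖ := by gcongr

theorem stmt_14_general {b btilde : E → E} {lam δ : ℝ}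
    (hb : ∀ u v, ⟪b u - b v, u - v⟫ ≤ lam * ‖u - v‖ ^ 2) (hclose : ∀ u, ‖b u - btilde u‖ ≤ δ)
    {x y : ℝ → E}
    (hxy : ∀ t ∈ Ici (0 : ℝ),
      HasDerivWithinAt (x - y) (b (x t) - btilde (y t)) (Ici 0) t) :
    ∀ t ∈ Ici (0 : ℝ), ‖x t - y t‖ ≤ gronwallBound ‖x 0 - y 0‖ lam δ t := by
  intro t ht
  have continuousOn_sub : ContinuousOn (x - y) (Icc 0 t) := fun s hs =>
    (hxy s hs.1).continuousWithinAt.mono Icc_subset_Ici_self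
  have deriv_right : ∀ s ∈ Ico 0 t,
      HasDerivWithinAt (x - y) (b (x s) - btilde (y s)) (Ici s) s := fun s hs =>
    (hxy s hs.1).mono (Ici_subset_Ici.2 hs.1)
  simpa only [sub_zero, Pi.sub_apply] using
    norm_le_gronwallBound_of_inner_deriv_right_le continuousOn_sub deriv_right le_rfl
      ((norm_nonneg _).trans (hclose 0))
      (fun s _ => inner_sub_le_of_inner_sub_le_of_norm_sub_le (hb (x s) (y s)) (hclose (y s)))
      t (right_mem_Icc.2 ht)

end InnerProductSpace

/-- Uniform closeness of solutions for a dissipative drift and a `δ`-perturbation: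
if `⟨b(u)−b(v), u−v⟩ ≤ λ|u−v|²` with `λ < 0`, `sup|b − b̃| ≤ δ`, and
`x' − y' = b∘x − b̃∘y` with `x(0) = y(0)`, then `|x(t)−y(t)| ≤ δ/(−λ)` for all `t ≥ 0`. -/
theorem stmt_14 (d : ℕ) (hd : 1 ≤ d) (lam δ : ℝ) (hlam : lam < 0) (hδ : 0 ≤ δ)
    (b btilde : EuclideanSpace ℝ (Fin d) → EuclideanSpace ℝ (Fin d))
    (hb : ∀ u v, ⟪b u - b v, u - v⟫ ≤ lam * ‖u - v‖ ^ 2)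
    (hclose : ∀ u, ‖b u - btilde u‖ ≤ δ)
    (x y x' y' : ℝ → EuclideanSpace ℝ (Fin d))
    (hx : ∀ t ∈ Set.Ici (0:ℝ), HasDerivWithinAt x (x' t) (Set.Ici 0) t)
    (hy : ∀ t ∈ Set.Ici (0:ℝ), HasDerivWithinAt y (y' t) (Set.Ici 0) t)
    (hxy : ∀ t ∈ Set.Ici (0:ℝ), x' t - y' t = b (x t) - btilde (y t))
    (h0 : x 0 = y 0) :
    ∀ t ∈ Set.Ici (0:ℝ), ‖x t - y t‖ ≤ δ / (-lam) := by
  intro t ht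
  have hderiv : ∀ s ∈ Set.Ici (0:ℝ),
      HasDerivWithinAt (x - y) (b (x s) - btilde (y s)) (Set.Ici 0) s := fun s hs =>
    hxy s hs ▸ (hx s hs).sub (hy s hs)
  have hinit : ‖x 0 - y 0‖ ≤ δ / (-lam) := by
    rw [h0, sub_self, norm_zero]
    exact div_nonneg hδ (neg_nonneg.2 hlam.le)
  exact (stmt_14_general hb hclose hderiv t ht).trans (gronwallBound_le_div_neg hlam hinit t)
end

section
/- Let p ∈ [1,2] and define Ψ : (0,∞) × (0,∞) → ℝ by Ψ(u,v) := u^p − v^p − p v^{p-1}(u − v). Then Ψ is nonnegative and jointly convex on (0,∞) × (0,∞). -/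
/-!
Writing `h = u - v`, Taylor's formula at `v` gives
`Ψ_Φ (u, v) = ∫ t in 0..1, (1 - t) * (h ^ 2 * Φ'' (v + t * h))`. The pair `(h, v + t * h)` is linear
in `(u, v)`, so `Ψ_Φ` is jointly convex as soon as `(h, w) ↦ h ^ 2 * Φ'' w` is. For `Φ u = u ^ p`
the latter is a nonnegative multiple of `h ^ 2 / w ^ (2 - p)`, a square over a concave function.
Differentiating in `t` and comparing at `t = 0` and `t = 1` replaces the integral, so that no
regularity of `Φ''` enters.
-/

open Set

/-- The Bregman divergence `Ψ_f (u, v) = f u - f v - f' v * (u - v)` of a function `f` on the real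
line, as a function of the pair `(u, v)`. The derivative `f'` is a separate argument, related to `f`
by `HasDerivAt` hypotheses. -/
def bregmanDiv (f f' : ℝ → ℝ) (q : ℝ × ℝ) : ℝ :=
  f q.1 - f q.2 - f' q.2 * (q.1 - q.2)

lemma bregmanDiv_nonneg {s : Set ℝ} {f f' : ℝ → ℝ} {u v : ℝ} (hf : ConvexOn ℝ s f) (hu : u ∈ s)
    (hv : v ∈ s) (hf' : HasDerivAt f (f' v) v) : 0 ≤ bregmanDiv f f' (u, v) := by
  suffices f' v * (u - v) ≤ f u - f v from sub_nonneg.2 this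
  rcases lt_trichotomy u v with huv | rfl | hvu
  · have hslope := hf.slope_le_of_hasDerivAt hu hv huv hf'
    rw [slope_def_field, div_le_iff₀ (sub_pos.2 huv)] at hslope
    linarith
  · simp
  · have hslope := hf.le_slope_of_hasDerivAt hv hu hvu hf'
    rwa [slope_def_field, le_div_iff₀ (sub_pos.2 hvu)] at hslope

section Convexity

variable {E : Type*} [AddCommMonoid E] [Module ℝ E] {s : Set E}

lemma convexOn_sq_div_of_concaveOn {g : E → ℝ} (hg : ConcaveOn ℝ s g) (hpos : ∀ x ∈ s, 0 < g x) :
    ConvexOn ℝ (univ ×ˢ s) fun q : ℝ × E ↦ q.1 ^ 2 / g q.2 := by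
  refine convexOn_iff_forall_pos.2 ⟨convex_univ.prod hg.1, ?_⟩
  rintro ⟨x, z⟩ ⟨-, hz⟩ ⟨y, w⟩ ⟨-, hw⟩ a b ha hb hab
  have hz_pos := mul_pos ha (hpos z hz)
  have hw_pos := mul_pos hb (hpos w hw)
  calc (a * x + b * y) ^ 2 / g (a • z + b • w)
      ≤ (a * x + b * y) ^ 2 / (a * g z + b * g w) := by
        gcongr
        exact hg.2 hz hw ha.le hb.le hab
    _ ≤ (a * x) ^ 2 / (a * g z) + (b * y) ^ 2 / (b * g w) := by
        simpa [Fin.forall_fin_two, hz_pos, hw_pos] using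
          Finset.univ.sq_sum_div_le_sum_sq_div ![a * x, b * y] (g := ![a * g z, b * g w])
    _ = a * (x ^ 2 / g z) + b * (y ^ 2 / g w) := by
        field_simp

lemma convexOn_of_convexOn_hasDerivAt {G G' : ℝ → E → ℝ} {t₀ t₁ : ℝ} (ht : t₀ ≤ t₁)
    (hG : ∀ x ∈ s, ∀ t ∈ Icc t₀ t₁, HasDerivAt (G · x) (G' t x) t)
    (hG_left : ConvexOn ℝ s (G t₀)) (hG' : ∀ t ∈ Ioo t₀ t₁, ConvexOn ℝ s (G' t)) :
    ConvexOn ℝ s (G t₁) := by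
  refine ⟨hG_left.1, fun x hx y hy a b ha hb hab ↦ ?_⟩
  let gap (H : ℝ → E → ℝ) (t : ℝ) : ℝ := a • H t x + b • H t y - H t (a • x + b • y)
  have hgap (t : ℝ) (ht : t ∈ Icc t₀ t₁) : HasDerivAt (gap G) (gap G' t) t :=
    (((hG x hx t ht).const_smul a).add ((hG y hy t ht).const_smul b)).sub
      (hG _ (hG_left.1 hx hy ha hb hab) t ht)
  have hmono : MonotoneOn (gap G) (Icc t₀ t₁) := by
    refine monotoneOn_of_hasDerivWithinAt_nonneg (f' := gap G') (convex_Icc t₀ t₁)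
      (HasDerivAt.continuousOn hgap)
      (fun t ht ↦ (hgap t (interior_subset ht)).hasDerivWithinAt) fun t ht ↦ ?_
    rw [interior_Icc] at ht
    exact sub_nonneg.2 ((hG' t ht).2 hx hy ha hb hab)
  refine sub_nonneg.1 (le_trans ?_ (hmono (left_mem_Icc.2 ht) (right_mem_Icc.2 ht) ht))
  exact sub_nonneg.2 (hG_left.2 hx hy ha hb hab)

end Convexity

lemma hasDerivAt_taylor_one_along_segment {f f' : ℝ → ℝ} {f'' v h t : ℝ}
    (hf : HasDerivAt f (f' (v + t * h)) (v + t * h)) (hf' : HasDerivAt f' f'' (v + t * h)) :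
    HasDerivAt (fun t ↦ f (v + t * h) + (1 - t) * (f' (v + t * h) * h))
      ((1 - t) * (h ^ 2 * f'')) t := by
  have hline : HasDerivAt (fun t ↦ v + t * h) h t := by
    simpa using ((hasDerivAt_id t).mul_const h).const_add v
  have hweight : HasDerivAt (fun t : ℝ ↦ 1 - t) (-1) t := (hasDerivAt_id t).const_sub 1
  refine ((hf.comp t hline).add (hweight.mul ((hf'.comp t hline).mul_const h))).congr_deriv ?_
  simp only [Function.comp_apply]
  ring

lemma convexOn_bregmanDiv {s : Set ℝ} {f f' f'' : ℝ → ℝ} (hs : Convex ℝ s)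
    (hf : ∀ x ∈ s, HasDerivAt f (f' x) x) (hf' : ∀ x ∈ s, HasDerivAt f' (f'' x) x)
    (hconv : ConvexOn ℝ (univ ×ˢ s) fun q : ℝ × ℝ ↦ q.1 ^ 2 * f'' q.2) :
    ConvexOn ℝ (s ×ˢ s) (bregmanDiv f f') := by
  let segment (q : ℝ × ℝ) (t : ℝ) : ℝ := q.2 + t * (q.1 - q.2)
  have hsegment {q : ℝ × ℝ} (hq : q ∈ s ×ˢ s) {t : ℝ} (ht : t ∈ Icc 0 1) : segment q t ∈ s :=
    hs.add_smul_sub_mem hq.2 hq.1 ht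
  -- `G t q` is the Taylor remainder integral restricted to `[0, t]`.
  let G (t : ℝ) (q : ℝ × ℝ) : ℝ :=
    f (segment q t) + (1 - t) * (f' (segment q t) * (q.1 - q.2)) - (f q.2 + f' q.2 * (q.1 - q.2))
  let G' (t : ℝ) (q : ℝ × ℝ) : ℝ := (1 - t) * ((q.1 - q.2) ^ 2 * f'' (segment q t))
  have hG : ∀ q ∈ s ×ˢ s, ∀ t ∈ Icc (0 : ℝ) 1, HasDerivAt (G · q) (G' t q) t := fun q hq t ht ↦
    (hasDerivAt_taylor_one_along_segment (hf _ (hsegment hq ht))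
      (hf' _ (hsegment hq ht))).sub_const _
  have hG_zero : G 0 = fun _ ↦ 0 := by
    ext q
    simp [G, segment]
  have hG_one : G 1 = bregmanDiv f f' := by
    ext q
    simp only [G, segment, bregmanDiv]
    ring_nf
  have hG' : ∀ t ∈ Ioo (0 : ℝ) 1, ConvexOn ℝ (s ×ˢ s) (G' t) := fun t ht ↦ by
    let diff : ℝ × ℝ →ₗ[ℝ] ℝ := LinearMap.fst ℝ ℝ ℝ - LinearMap.snd ℝ ℝ ℝ
    have hcomp := hconv.comp_linearMap (diff.prod (LinearMap.snd ℝ ℝ ℝ + t • diff))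
    have hsub := hcomp.subset (fun q hq ↦ ⟨mem_univ _, hsegment hq (Ioo_subset_Icc_self ht)⟩)
      (hs.prod hs)
    exact hsub.smul (sub_nonneg.2 ht.2.le)
  rw [← hG_one]
  exact convexOn_of_convexOn_hasDerivAt zero_le_one hG
    (hG_zero ▸ convexOn_const 0 (hs.prod hs)) hG'

lemma convexOn_sq_mul_rpow {r : ℝ} (hr : r ∈ Icc (-1 : ℝ) 0) :
    ConvexOn ℝ (univ ×ˢ Ioi 0) fun q : ℝ × ℝ ↦ q.1 ^ 2 * q.2 ^ r := by
  have hconcave : ConcaveOn ℝ (Ioi 0) fun w : ℝ ↦ w ^ (-r) :=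
    (Real.concaveOn_rpow (by linarith [hr.2]) (by linarith [hr.1])).subset Ioi_subset_Ici_self
      (convex_Ioi 0)
  refine (convexOn_sq_div_of_concaveOn hconcave fun w hw ↦ Real.rpow_pos_of_pos hw _).congr ?_
  rintro ⟨h, w⟩ ⟨-, hw⟩
  simp only [Real.rpow_neg (le_of_lt hw), div_inv_eq_mul]

/-- For `Φ(u) = u^p` with `p ∈ [1,2]`, the function
`Ψ(u,v) = u^p − v^p − p v^{p−1}(u − v)` is nonnegative and jointly convex on
`(0,∞) × (0,∞)`. -/
theorem stmt_17 (p : ℝ) (hp : p ∈ Set.Icc (1:ℝ) 2) :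
    (∀ u v : ℝ, 0 < u → 0 < v →
      0 ≤ u ^ p - v ^ p - p * v ^ (p - 1) * (u - v)) ∧
    ConvexOn ℝ (Set.Ioi (0:ℝ) ×ˢ Set.Ioi (0:ℝ))
      (fun q : ℝ × ℝ => q.1 ^ p - q.2 ^ p - p * q.2 ^ (p - 1) * (q.1 - q.2)) := by
  obtain ⟨hp_one, hp_two⟩ := hp
  have hderiv (r x : ℝ) (hx : x ∈ Ioi 0) : HasDerivAt (· ^ r) (r * x ^ (r - 1)) x :=
    Real.hasDerivAt_rpow_const (.inl (ne_of_gt hx))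
  constructor
  · intro u v hu hv
    exact bregmanDiv_nonneg (f' := fun x ↦ p * x ^ (p - 1)) (convexOn_rpow hp_one) hu.le hv.le
      (hderiv p v hv)
  · refine convexOn_bregmanDiv (f := (· ^ p)) (f' := fun x ↦ p * x ^ (p - 1)) (convex_Ioi 0)
      (hderiv p) (fun x hx ↦ (hderiv (p - 1) x hx).const_mul p) ?_
    have hsq : ConvexOn ℝ (univ ×ˢ Ioi 0) fun q : ℝ × ℝ ↦ q.1 ^ 2 * q.2 ^ (p - 1 - 1) :=
      convexOn_sq_mul_rpow ⟨by linarith, by linarith⟩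
    refine (hsq.smul (c := p * (p - 1)) (mul_nonneg (by linarith) (by linarith))).congr ?_
    intro q _
    simp only [smul_eq_mul]
    ring
end

section
/- Let d ≥ 1 and θ < 0. Let ν be a measure on ℝ^d with ∫_{{|z|>1}} |z|^{1-θ} ν(dz) < ∞, and set M := ∫_{{|z|>1}} |z| ν(dz). Let σ₂ : ℝ^d → ℝ^{d×d} and suppose L := limsup_{|x|→∞} ‖σ₂(x)‖ · |x|^{-θ} < ∞. Then limsup_{|x|→∞} ∫_{{|z|>1}} |z| · ‖σ₂(x)‖ · (|x| + ‖σ₂(x)‖·|z|)^{-θ} ν(dz) ≤ L · M. -/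
open MeasureTheory Filter

/-!
Put `p = -θ ≥ 0` and, for large `‖x‖`, factor the integrand as
`(‖σ₂ x‖ * ‖x‖ ^ p) * (‖z‖ * (1 + δ x * ‖z‖) ^ p)` with `δ x = ‖σ₂ x‖ / ‖x‖`. Boundedness of the
first factor forces `δ x → 0`, so by dominated convergence the integral of the second factor over
`1 < ‖z‖` tends to that of `‖z‖`, and submultiplicativity of the limsup gives the bound.
-/

section Growth

variable {ι : Type*} {l : Filter ι} {r s : ι → ℝ} {p : ℝ}

theorem isBoundedUnder_le_of_limsup_ofReal_ne_top {u : ι → ℝ}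
    (hu : limsup (fun i => ENNReal.ofReal (u i)) l ≠ ⊤) : l.IsBoundedUnder (· ≤ ·) u := by
  obtain ⟨c, hLc, hc⟩ := ENNReal.lt_iff_exists_nnreal_btwn.1 hu.lt_top
  refine isBoundedUnder_of_eventually_le (a := (c : ℝ)) ?_
  filter_upwards [eventually_lt_of_limsup_lt hLc] with i hi
  simpa only [ENNReal.coe_toReal] using (ENNReal.ofReal_le_iff_le_toReal hc.ne).1 hi.le

theorem tendsto_div_zero_of_isBoundedUnder_mul_rpow (hp : -1 < p) (hr : Tendsto r l atTop)
    (hsr : l.IsBoundedUnder (· ≤ ·) fun i => ‖s i * r i ^ p‖) :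
    Tendsto (fun i => s i / r i) l (nhds 0) := by
  have hdecay : Tendsto (fun i => r i ^ (-(1 + p))) l (nhds 0) :=
    (tendsto_rpow_neg_atTop (by linarith)).comp hr
  refine (hdecay.zero_mul_isBoundedUnder_le hsr).congr' ?_
  filter_upwards [hr.eventually_gt_atTop 0] with i hi
  calc r i ^ (-(1 + p)) * (s i * r i ^ p) = s i * (r i ^ (-(1 + p)) * r i ^ p) := by ring
    _ = s i * r i ^ (-1 : ℝ) := by rw [← Real.rpow_add hi]; ring_nf
    _ = s i / r i := by rw [Real.rpow_neg_one, div_eq_mul_inv]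

end Growth

theorem mul_mul_add_mul_rpow_eq {r s t p : ℝ} (hr : 0 < r) (hs : 0 ≤ s) (ht : 0 ≤ t) :
    t * s * (r + s * t) ^ p = s * r ^ p * (t * (1 + s / r * t) ^ p) := by
  have hsum : r + s * t = r * (1 + s / r * t) := by field_simp
  rw [hsum, Real.mul_rpow hr.le (by positivity)]
  ring

section Integral

variable {Ω ι : Type*} [MeasurableSpace Ω] {μ : Measure Ω} {f : Ω → ℝ} {l : Filter ι} {p : ℝ}

theorem lintegral_mul_one_add_rpow_ne_top (hp : 0 ≤ p) (hf : ∀ᵐ ω ∂μ, 1 ≤ f ω)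
    (hfp : ∫⁻ ω, ENNReal.ofReal (f ω ^ (1 + p)) ∂μ ≠ ⊤) :
    ∫⁻ ω, ENNReal.ofReal (f ω * (1 + f ω) ^ p) ∂μ ≠ ⊤ := by
  have hbound : ∀ᵐ ω ∂μ, ENNReal.ofReal (f ω * (1 + f ω) ^ p) ≤
      ENNReal.ofReal (2 ^ p) * ENNReal.ofReal (f ω ^ (1 + p)) := by
    filter_upwards [hf] with ω hω
    rw [← ENNReal.ofReal_mul (by positivity)]
    refine ENNReal.ofReal_le_ofReal ?_
    calc f ω * (1 + f ω) ^ p ≤ f ω * (2 * f ω) ^ p := by gcongr; linarith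
      _ = 2 ^ p * (f ω * f ω ^ p) := by
        rw [Real.mul_rpow zero_le_two (by linarith)]; ring
      _ = 2 ^ p * f ω ^ (1 + p) := by rw [Real.rpow_one_add' (by linarith) (by linarith)]
  refine ne_top_of_le_ne_top ?_ (lintegral_mono_ae hbound)
  rw [lintegral_const_mul' _ _ ENNReal.ofReal_ne_top]
  exact ENNReal.mul_ne_top ENNReal.ofReal_ne_top hfp

theorem lintegral_ne_top_of_mul_one_add_rpow (hp : 0 ≤ p) (hf : 0 ≤ᵐ[μ] f)
    (hfp : ∫⁻ ω, ENNReal.ofReal (f ω * (1 + f ω) ^ p) ∂μ ≠ ⊤) :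
    ∫⁻ ω, ENNReal.ofReal (f ω) ∂μ ≠ ⊤ := by
  refine ne_top_of_le_ne_top hfp (lintegral_mono_ae ?_)
  filter_upwards [hf] with ω (hω : 0 ≤ f ω)
  exact ENNReal.ofReal_le_ofReal <|
    le_mul_of_one_le_right hω (Real.one_le_rpow (by linarith) hp)

variable [l.IsCountablyGenerated]

theorem tendsto_lintegral_mul_one_add_mul_rpow {δ : ι → ℝ} (hp : 0 ≤ p) (hfm : AEMeasurable f μ)
    (hf : 0 ≤ᵐ[μ] f) (hfp : ∫⁻ ω, ENNReal.ofReal (f ω * (1 + f ω) ^ p) ∂μ ≠ ⊤)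
    (hδ : Tendsto δ l (nhds 0)) :
    Tendsto (fun i => ∫⁻ ω, ENNReal.ofReal (f ω * (1 + δ i * f ω) ^ p) ∂μ) l
      (nhds (∫⁻ ω, ENNReal.ofReal (f ω) ∂μ)) := by
  refine tendsto_lintegral_filter_of_dominated_convergence'
    (fun ω => ENNReal.ofReal (f ω * (1 + f ω) ^ p)) ?measurable ?bound hfp ?limit
  case measurable => exact .of_forall fun i => by fun_prop
  case bound =>
    have hδ_le : ∀ᶠ i in l, |δ i| ≤ 1 := hδ.abs.eventually_le_const (by norm_num)
    filter_upwards [hδ_le] with i hi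
    filter_upwards [hf] with ω (hω : 0 ≤ f ω)
    have habs : |1 + δ i * f ω| ≤ 1 + f ω :=
      calc |1 + δ i * f ω| ≤ |1| + |δ i * f ω| := abs_add_le _ _
        _ = 1 + |δ i| * f ω := by rw [abs_one, abs_mul, abs_of_nonneg hω]
        _ ≤ 1 + f ω := by gcongr; exact mul_le_of_le_one_left hω hi
    have hrpow : (1 + δ i * f ω) ^ p ≤ (1 + f ω) ^ p :=
      calc (1 + δ i * f ω) ^ p ≤ |1 + δ i * f ω| ^ p :=
            (le_abs_self _).trans (Real.abs_rpow_le_abs_rpow _ _)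
        _ ≤ (1 + f ω) ^ p := by gcongr
    gcongr
  case limit =>
    refine .of_forall fun ω => ENNReal.tendsto_ofReal ?_
    have hbase : Tendsto (fun i => 1 + δ i * f ω) l (nhds 1) := by
      simpa using (hδ.mul_const (f ω)).const_add 1
    simpa using (hbase.rpow_const (p := p) (.inl one_ne_zero)).const_mul (f ω)

theorem limsup_lintegral_mul_add_mul_rpow_le {r s : ι → ℝ} (hp : 0 ≤ p) (hfm : AEMeasurable f μ)
    (hf : 0 ≤ᵐ[μ] f) (hfp : ∫⁻ ω, ENNReal.ofReal (f ω * (1 + f ω) ^ p) ∂μ ≠ ⊤)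
    (hr : Tendsto r l atTop) (hs : 0 ≤ᶠ[l] s)
    (hsr : limsup (fun i => ENNReal.ofReal (s i * r i ^ p)) l ≠ ⊤) :
    limsup (fun i => ∫⁻ ω, ENNReal.ofReal (f ω * s i * (r i + s i * f ω) ^ p) ∂μ) l ≤
      limsup (fun i => ENNReal.ofReal (s i * r i ^ p)) l * ∫⁻ ω, ENNReal.ofReal (f ω) ∂μ := by
  rcases eq_or_neBot l with rfl | _
  · simp
  have hr_pos : ∀ᶠ i in l, 0 < r i := hr.eventually_gt_atTop 0
  have hcoeff_nonneg : ∀ᶠ i in l, 0 ≤ s i * r i ^ p := by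
    filter_upwards [hr_pos, hs] with i hri hsi
    exact mul_nonneg hsi (Real.rpow_nonneg hri.le p)
  have hratio : Tendsto (fun i => s i / r i) l (nhds 0) := by
    refine tendsto_div_zero_of_isBoundedUnder_mul_rpow (by linarith) hr ?_
    exact (isBoundedUnder_le_of_limsup_ofReal_ne_top hsr).mono_le
      (hcoeff_nonneg.mono fun i hi => (Real.norm_of_nonneg hi).le)
  have hlim := tendsto_lintegral_mul_one_add_mul_rpow hp hfm hf hfp hratio
  have hfactor : (fun i => ∫⁻ ω, ENNReal.ofReal (f ω * s i * (r i + s i * f ω) ^ p) ∂μ) =ᶠ[l]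
      (fun i => ENNReal.ofReal (s i * r i ^ p)) *
        fun i => ∫⁻ ω, ENNReal.ofReal (f ω * (1 + s i / r i * f ω) ^ p) ∂μ := by
    filter_upwards [hr_pos, hs, hcoeff_nonneg] with i hri hsi hcoeff
    rw [Pi.mul_apply, ← lintegral_const_mul' _ _ ENNReal.ofReal_ne_top]
    refine lintegral_congr_ae (hf.mono fun ω hω => ?_)
    simp only [mul_mul_add_mul_rpow_eq hri hsi hω, ENNReal.ofReal_mul hcoeff]
  rw [limsup_congr hfactor, ← hlim.limsup_eq]
  refine ENNReal.limsup_mul_le' (.inr ?_) (.inl hsr)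
  rw [hlim.limsup_eq]
  exact lintegral_ne_top_of_mul_one_add_rpow hp hf hfp

end Integral

theorem stmt_18_general {X E F : Type*} [SeminormedAddGroup X] [SeminormedAddGroup F]
    [NormedAddCommGroup E] [MeasurableSpace E] [OpensMeasurableSpace E] {θ : ℝ} (hθ : θ ≤ 0)
    (ν : Measure E)
    (hν : ∫⁻ z in {z : E | 1 < ‖z‖}, ENNReal.ofReal (‖z‖ ^ (1 - θ)) ∂ν ≠ ⊤) (σ₂ : X → F)
    (hL : limsup (fun x => ENNReal.ofReal (‖σ₂ x‖ * ‖x‖ ^ (-θ)))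
      (comap (fun x : X => ‖x‖) atTop) ≠ ⊤) :
    limsup
        (fun x => ∫⁻ z in {z : E | 1 < ‖z‖},
          ENNReal.ofReal (‖z‖ * ‖σ₂ x‖ * (‖x‖ + ‖σ₂ x‖ * ‖z‖) ^ (-θ)) ∂ν)
        (comap (fun x : X => ‖x‖) atTop) ≤
      limsup (fun x => ENNReal.ofReal (‖σ₂ x‖ * ‖x‖ ^ (-θ))) (comap (fun x : X => ‖x‖) atTop) *
        ∫⁻ z in {z : E | 1 < ‖z‖}, ENNReal.ofReal ‖z‖ ∂ν := by
  rw [sub_eq_add_neg] at hν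
  have hp : 0 ≤ -θ := neg_nonneg.2 hθ
  have hone_le : ∀ᵐ z ∂ν.restrict {z : E | 1 < ‖z‖}, 1 ≤ ‖z‖ := by
    filter_upwards [ae_restrict_mem (measurableSet_lt measurable_const measurable_norm)]
      with z (hz : 1 < ‖z‖)
    exact hz.le
  exact limsup_lintegral_mul_add_mul_rpow_le hp measurable_norm.aemeasurable
    (.of_forall norm_nonneg) (lintegral_mul_one_add_rpow_ne_top hp hone_le hν) tendsto_comap
    (.of_forall fun x => norm_nonneg (σ₂ x)) hL

/-- The implication from condition (21) to condition (21') in Corollary 3.2(4):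
for `θ < 0`, `∫_{|z|>1}|z|^{1-θ} ν(dz) < ∞`, and
`L = limsup_{|x|→∞} ‖σ₂(x)‖|x|^{-θ} < ∞`, one has
`limsup_{|x|→∞} ∫_{|z|>1} |z|‖σ₂(x)‖(|x|+‖σ₂(x)‖|z|)^{-θ} ν(dz) ≤ L·M`,
where `M = ∫_{|z|>1} |z| ν(dz)`. -/
theorem stmt_18 (d : ℕ) (hd : 1 ≤ d) (θ : ℝ) (hθ : θ < 0)
    (ν : Measure (EuclideanSpace ℝ (Fin d)))
    (hν : ∫⁻ z in {z : EuclideanSpace ℝ (Fin d) | 1 < ‖z‖},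
        ENNReal.ofReal (‖z‖ ^ (1 - θ)) ∂ν ≠ ⊤)
    (σ₂ : EuclideanSpace ℝ (Fin d) → EuclideanSpace ℝ (Fin d) →L[ℝ] EuclideanSpace ℝ (Fin d))
    (hL : limsup (fun x => ENNReal.ofReal (‖σ₂ x‖ * ‖x‖ ^ (-θ)))
        (comap (fun x : EuclideanSpace ℝ (Fin d) => ‖x‖) atTop) ≠ ⊤) :
    limsup
        (fun x => ∫⁻ z in {z : EuclideanSpace ℝ (Fin d) | 1 < ‖z‖},
          ENNReal.ofReal (‖z‖ * ‖σ₂ x‖ * (‖x‖ + ‖σ₂ x‖ * ‖z‖) ^ (-θ)) ∂ν)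
        (comap (fun x : EuclideanSpace ℝ (Fin d) => ‖x‖) atTop) ≤
      (limsup (fun x => ENNReal.ofReal (‖σ₂ x‖ * ‖x‖ ^ (-θ)))
        (comap (fun x : EuclideanSpace ℝ (Fin d) => ‖x‖) atTop)) *
      ∫⁻ z in {z : EuclideanSpace ℝ (Fin d) | 1 < ‖z‖}, ENNReal.ofReal ‖z‖ ∂ν := by
  exact stmt_18_general hθ.le ν hν σ₂ hL
end
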